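/- The identity (96/π²) · ∫₀^{π/2} ∫₀^{π/2} ∫₀^{π/2} √(cos²φ · sin²ψ + cos²ψ) · sin φ · sin²ψ dψ dφ dθ = 8 holds; equivalently, ∫₀^{π/2} ∫₀^{π/2} √(cos²φ sin²ψ + cos²ψ) sin φ sin²ψ dψ dφ = π/6. (This is the mean surface area E(ar) of the projection of a unit 4-cube onto a uniformly random 3-subspace of ℝ⁴.) -/

import Mathlib

open Real

/-!
Project the octant of the unit sphere in `ℝ³` parametrized by `(φ, ψ)` to the plane by
`(z, w) = (cos φ sin ψ, cos ψ)`. The Jacobian of this map is exactly the weight `sin φ sin² ψ`, so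
the double integral is that of `√(z² + w²)` over a quarter of the unit disc, which polar
coordinates evaluate as `(π / 2) ∫₀¹ r² dr = π / 6`.
-/

section

open MeasureTheory Set

variable {E : Type*} [NormedAddCommGroup E] [NormedSpace ℝ E]

theorem intervalIntegral_intervalIntegral_eq_setIntegral_Ioo_prod {F : ℝ × ℝ → E} {a b c d : ℝ}
    (hab : a ≤ b) (hcd : c ≤ d) (hF : IntegrableOn F (Ioo a b ×ˢ Ioo c d)) :
    ∫ x in a..b, ∫ y in c..d, F (x, y) = ∫ p in Ioo a b ×ˢ Ioo c d, F p := by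
  simp only [intervalIntegral.integral_of_le hab, intervalIntegral.integral_of_le hcd,
    integral_Ioc_eq_integral_Ioo]
  exact (setIntegral_prod F hF).symm

/-- The open unit quarter disc in the first quadrant of the plane. -/
def unitQuarterDisc : Set (ℝ × ℝ) :=
  {p | 0 < p.1 ∧ 0 < p.2 ∧ p.1 ^ 2 + p.2 ^ 2 < 1}

theorem setIntegral_image_polarCoord_symm {s : Set (ℝ × ℝ)} (hs : MeasurableSet s)
    (hst : s ⊆ polarCoord.target) (f : ℝ × ℝ → E) :
    ∫ p in polarCoord.symm '' s, f p = ∫ p in s, p.1 • f (polarCoord.symm p) := by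
  rw [integral_image_eq_integral_abs_det_fderiv_smul volume hs
    (fun p _ ↦ (hasFDerivAt_polarCoord_symm p).hasFDerivWithinAt)
    (polarCoord.symm.injOn.mono hst)]
  refine setIntegral_congr_fun hs fun p hp ↦ ?_
  have hradius : 0 < p.1 := (hst hp).1
  simp only [det_fderivPolarCoordSymm, abs_of_pos hradius]

theorem Ioo_prod_Ioo_subset_polarCoord_target :
    Ioo (0 : ℝ) 1 ×ˢ Ioo 0 (π / 2) ⊆ polarCoord.target :=
  prod_mono Ioo_subset_Ioi_self (Ioo_subset_Ioo (by linarith [pi_pos]) (by linarith [pi_pos]))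

theorem polarCoord_symm_image_eq_unitQuarterDisc :
    polarCoord.symm '' (Ioo 0 1 ×ˢ Ioo 0 (π / 2)) = unitQuarterDisc := by
  ext ⟨x, y⟩
  constructor
  · rintro ⟨⟨r, θ⟩, ⟨⟨hr₀, hr₁⟩, ⟨hθ₀, hθ₁⟩⟩, hp⟩
    obtain ⟨rfl, rfl⟩ := Prod.mk.inj hp
    have hradius : (r * cos θ) ^ 2 + (r * sin θ) ^ 2 = r ^ 2 := by
      linear_combination r ^ 2 * sin_sq_add_cos_sq θ
    exact ⟨mul_pos hr₀ (cos_pos_of_mem_Ioo ⟨by linarith, hθ₁⟩),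
      mul_pos hr₀ (sin_pos_of_pos_of_lt_pi hθ₀ (by linarith)),
      hradius.trans_lt (pow_lt_one₀ hr₀.le hr₁ two_ne_zero)⟩
  · rintro ⟨hx : 0 < x, hy : 0 < y, hxy : x ^ 2 + y ^ 2 < 1⟩
    have hpolar : polarCoord.symm (polarCoord (x, y)) = (x, y) := polarCoord.left_inv (.inl hx)
    refine ⟨polarCoord (x, y), ⟨⟨sqrt_pos.2 (by positivity), ?_⟩, ?_, ?_⟩, hpolar⟩
    · exact (sqrt_lt' one_pos).2 (by linarith)
    · exact (Complex.arg_nonneg_iff.2 hy.le).lt_of_ne'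
        fun harg ↦ hy.ne' (Complex.arg_eq_zero_iff.1 harg).2
    · exact Complex.arg_lt_pi_div_two_iff.2 (.inl hx)

theorem setIntegral_unitQuarterDisc_radial (g : ℝ → E) :
    ∫ p in unitQuarterDisc, g √(p.1 ^ 2 + p.2 ^ 2) = (π / 2) • ∫ r in (0 : ℝ)..1, r • g r := by
  have hmeas : MeasurableSet (Ioo (0 : ℝ) 1 ×ˢ Ioo 0 (π / 2)) :=
    measurableSet_Ioo.prod measurableSet_Ioo
  have hradius : ∀ p ∈ Ioo (0 : ℝ) 1 ×ˢ Ioo 0 (π / 2),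
      √((polarCoord.symm p).1 ^ 2 + (polarCoord.symm p).2 ^ 2) = p.1 := fun p hp ↦
    congrArg Prod.fst (polarCoord.right_inv (Ioo_prod_Ioo_subset_polarCoord_target hp))
  calc ∫ p in unitQuarterDisc, g √(p.1 ^ 2 + p.2 ^ 2)
      = ∫ p in Ioo (0 : ℝ) 1 ×ˢ Ioo 0 (π / 2), p.1 • g p.1 := by
        rw [← polarCoord_symm_image_eq_unitQuarterDisc,
          setIntegral_image_polarCoord_symm hmeas Ioo_prod_Ioo_subset_polarCoord_target]
        exact setIntegral_congr_fun hmeas fun p hp ↦ by simp only [hradius p hp]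
    _ = (π / 2) • ∫ r in Ioo (0 : ℝ) 1, r • g r := by
        rw [Measure.volume_eq_prod, ← Measure.prod_restrict,
          integral_fun_fst (fun r : ℝ ↦ r • g r), measureReal_restrict_apply_univ,
          Real.volume_real_Ioo_of_le pi_div_two_pos.le, sub_zero]
    _ = (π / 2) • ∫ r in (0 : ℝ)..1, r • g r := by
        rw [intervalIntegral.integral_of_le zero_le_one, integral_Ioc_eq_integral_Ioo]

/-- The orthogonal projection, along the first axis, of the point
`(sin φ * sin ψ, cos φ * sin ψ, cos ψ)` of the unit sphere, as a function of `(φ, ψ)`. -/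
noncomputable def sphereProj (p : ℝ × ℝ) : ℝ × ℝ :=
  (cos p.1 * sin p.2, cos p.2)

/-- The derivative of `sphereProj`, see `hasFDerivAt_sphereProj`. -/
noncomputable def fderivSphereProj (p : ℝ × ℝ) : ℝ × ℝ →L[ℝ] ℝ × ℝ :=
  (Matrix.toLin (.finTwoProd ℝ) (.finTwoProd ℝ)
    !![-sin p.1 * sin p.2, cos p.1 * cos p.2; 0, -sin p.2]).toContinuousLinearMap

theorem hasFDerivAt_sphereProj (p : ℝ × ℝ) :
    HasFDerivAt sphereProj (fderivSphereProj p) p := by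
  unfold fderivSphereProj
  rw [Matrix.toLin_finTwoProd_toContinuousLinearMap]
  have hfst : HasFDerivAt Prod.fst (.fst ℝ ℝ ℝ) p := hasFDerivAt_fst
  have hsnd : HasFDerivAt Prod.snd (.snd ℝ ℝ ℝ) p := hasFDerivAt_snd
  refine ((hfst.cos.mul hsnd.sin).prodMk hsnd.cos).congr_fderiv ?_
  ext <;> simp [mul_comm]

theorem det_fderivSphereProj (p : ℝ × ℝ) :
    (fderivSphereProj p).det = sin p.1 * sin p.2 ^ 2 := by
  unfold fderivSphereProj
  simp only [LinearMap.det_toContinuousLinearMap, LinearMap.det_toLin, Matrix.det_fin_two_of]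
  ring

theorem injOn_sphereProj : InjOn sphereProj (Ioo 0 π ×ˢ Ioo 0 π) := by
  rintro ⟨φ, ψ⟩ ⟨hφ, hψ⟩ ⟨φ', ψ'⟩ ⟨hφ', hψ'⟩ h
  obtain ⟨hfst, hsnd⟩ := Prod.mk.inj h
  obtain rfl : ψ = ψ' :=
    injOn_cos (Ioo_subset_Icc_self hψ) (Ioo_subset_Icc_self hψ') hsnd
  have hcos : cos φ = cos φ' := mul_right_cancel₀ (sin_pos_of_mem_Ioo hψ).ne' hfst
  exact Prod.ext (injOn_cos (Ioo_subset_Icc_self hφ) (Ioo_subset_Icc_self hφ') hcos) rfl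

theorem setIntegral_image_sphereProj {s : Set (ℝ × ℝ)} (hs : MeasurableSet s)
    (hsπ : s ⊆ Ioo 0 π ×ˢ Ioo 0 π) (f : ℝ × ℝ → E) :
    ∫ p in sphereProj '' s, f p = ∫ p in s, (sin p.1 * sin p.2 ^ 2) • f (sphereProj p) := by
  rw [integral_image_eq_integral_abs_det_fderiv_smul volume hs
    (fun p _ ↦ (hasFDerivAt_sphereProj p).hasFDerivWithinAt) (injOn_sphereProj.mono hsπ)]
  refine setIntegral_congr_fun hs fun p hp ↦ ?_
  have hdet : 0 < sin p.1 * sin p.2 ^ 2 :=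
    mul_pos (sin_pos_of_mem_Ioo (hsπ hp).1) (pow_pos (sin_pos_of_mem_Ioo (hsπ hp).2) 2)
  simp only [det_fderivSphereProj, abs_of_pos hdet]

theorem sphereProj_image_eq_unitQuarterDisc :
    sphereProj '' (Ioo 0 (π / 2) ×ˢ Ioo 0 (π / 2)) = unitQuarterDisc := by
  ext ⟨x, y⟩
  constructor
  · rintro ⟨⟨φ, ψ⟩, ⟨⟨hφ₀, hφ₁⟩, ⟨hψ₀, hψ₁⟩⟩, hp⟩
    obtain ⟨rfl, rfl⟩ := Prod.mk.inj hp
    have hsinφ : 0 < sin φ := sin_pos_of_pos_of_lt_pi hφ₀ (by linarith)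
    have hsinψ : 0 < sin ψ := sin_pos_of_pos_of_lt_pi hψ₀ (by linarith)
    have hsphere : (sin φ * sin ψ) ^ 2 + ((cos φ * sin ψ) ^ 2 + cos ψ ^ 2) = 1 := by
      linear_combination sin ψ ^ 2 * sin_sq_add_cos_sq φ + sin_sq_add_cos_sq ψ
    exact ⟨mul_pos (cos_pos_of_mem_Ioo ⟨by linarith, hφ₁⟩) hsinψ,
      cos_pos_of_mem_Ioo ⟨by linarith, hψ₁⟩,
      by linarith [pow_pos (mul_pos hsinφ hsinψ) 2]⟩
  · rintro ⟨hx : 0 < x, hy : 0 < y, hxy : x ^ 2 + y ^ 2 < 1⟩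
    have hy₁ : y < 1 := by nlinarith
    have hρ : 0 < √(1 - y ^ 2) := sqrt_pos.2 (by nlinarith)
    have hxρ : x / √(1 - y ^ 2) < 1 := (div_lt_one hρ).2 (lt_sqrt_of_sq_lt (by linarith))
    refine ⟨(arccos (x / √(1 - y ^ 2)), arccos y),
      ⟨⟨arccos_pos.2 hxρ, arccos_lt_pi_div_two.2 (div_pos hx hρ)⟩,
        arccos_pos.2 hy₁, arccos_lt_pi_div_two.2 hy⟩, Prod.ext ?_ ?_⟩
    · simp only [sphereProj]
      rw [cos_arccos (by linarith [div_pos hx hρ]) hxρ.le, sin_arccos, div_mul_cancel₀ _ hρ.ne']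
    · exact cos_arccos (by linarith) hy₁.le

theorem setIntegral_sphere_octant_radial (g : ℝ → E) :
    ∫ p in Ioo 0 (π / 2) ×ˢ Ioo 0 (π / 2),
        (sin p.1 * sin p.2 ^ 2) • g √((cos p.1 * sin p.2) ^ 2 + cos p.2 ^ 2)
      = (π / 2) • ∫ r in (0 : ℝ)..1, r • g r := by
  have hquarter : Ioo (0 : ℝ) (π / 2) ⊆ Ioo 0 π := Ioo_subset_Ioo_right (by linarith [pi_pos])
  rw [← setIntegral_unitQuarterDisc_radial, ← sphereProj_image_eq_unitQuarterDisc,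
    setIntegral_image_sphereProj (measurableSet_Ioo.prod measurableSet_Ioo)
      (prod_mono hquarter hquarter)]
  rfl

theorem integral_sphere_octant_sqrt :
    ∫ φ in (0 : ℝ)..(π / 2), ∫ ψ in (0 : ℝ)..(π / 2),
      √(cos φ ^ 2 * sin ψ ^ 2 + cos ψ ^ 2) * sin φ * sin ψ ^ 2 = π / 6 := by
  let F : ℝ × ℝ → ℝ := fun p ↦
    √(cos p.1 ^ 2 * sin p.2 ^ 2 + cos p.2 ^ 2) * sin p.1 * sin p.2 ^ 2
  have hF : IntegrableOn F (Ioo 0 (π / 2) ×ˢ Ioo 0 (π / 2)) :=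
    ((by fun_prop : Continuous F).continuousOn.integrableOn_compact
      (isCompact_Icc.prod isCompact_Icc)).mono_set
        (prod_mono Ioo_subset_Icc_self Ioo_subset_Icc_self)
  calc ∫ φ in (0 : ℝ)..(π / 2), ∫ ψ in (0 : ℝ)..(π / 2), F (φ, ψ)
      = ∫ p in Ioo 0 (π / 2) ×ˢ Ioo 0 (π / 2), F p :=
        intervalIntegral_intervalIntegral_eq_setIntegral_Ioo_prod
          pi_div_two_pos.le pi_div_two_pos.le hF
    _ = ∫ p in Ioo 0 (π / 2) ×ˢ Ioo 0 (π / 2),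
          (sin p.1 * sin p.2 ^ 2) • √((cos p.1 * sin p.2) ^ 2 + cos p.2 ^ 2) := by
        congr with p
        simp only [F, mul_pow, smul_eq_mul]
        ring
    _ = (π / 2) • ∫ r in (0 : ℝ)..1, r • r := setIntegral_sphere_octant_radial id
    _ = π / 6 := by
        simp only [smul_eq_mul, ← sq, integral_pow]
        ring

end

/-- The mean surface area `E(ar)` of the projection of a unit 4-cube onto a uniformly
random 3-subspace of `ℝ⁴` equals `8`; equivalently the underlying double integral
equals `π/6`. -/
theorem mean_surface_area_projection_4cube :
    ((96 / π ^ 2) *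
      ∫ _θ in (0:ℝ)..(π/2), ∫ φ in (0:ℝ)..(π/2), ∫ ψ in (0:ℝ)..(π/2),
        Real.sqrt (Real.cos φ ^ 2 * Real.sin ψ ^ 2 + Real.cos ψ ^ 2) *
          Real.sin φ * Real.sin ψ ^ 2 = 8)
    ∧
    (∫ φ in (0:ℝ)..(π/2), ∫ ψ in (0:ℝ)..(π/2),
        Real.sqrt (Real.cos φ ^ 2 * Real.sin ψ ^ 2 + Real.cos ψ ^ 2) *
          Real.sin φ * Real.sin ψ ^ 2 = π / 6) := by
  refine ⟨?_, integral_sphere_octant_sqrt⟩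
  rw [integral_sphere_octant_sqrt, intervalIntegral.integral_const, sub_zero, smul_eq_mul]
  field_simp
  norm_num
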